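/- arXiv:2011.08938 — 3 statements merged into one kernel-verified Lean document; each statement's English description precedes it below -/
import Mathlib

section
/- Let m ≥ n ≥ 2 be integers and let a_{ij} denote the (i,j) entry of the inverse of the adjacency matrix A(B_{m,n}) (which is invertible). Then: (i) a_{ij} = −(m+n−4)/(m+n−3) whenever 1 ≤ i = j ≤ m−1 or m+2 ≤ i = j ≤ m+n; (ii) a_{ij} = 1/(m+n−3) whenever i ≠ j and both i, j lie in {1, …, m−1}, or i ≠ j and both i, j lie in {m+2, …, m+n}; (iii) a_{ij} = −1/(m+n−3) whenever one of i, j lies in {1, …, m−1} and the other lies in {m+2, …, m+n}. -/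
/-- The complete bridge graph `B_{m,n}` on vertex set `Fin (m+n)` (0-indexed version of the
paper's `{1, …, m+n}`): vertices `0, …, m-1` form a complete graph `K_m`, vertices
`m, …, m+n-1` form a complete graph `K_n`, and the only further edge is the bridge joining
vertex `m-1` (the paper's vertex `m`) to vertex `m` (the paper's vertex `m+1`). -/
def bridgeGraph (m n : ℕ) : SimpleGraph (Fin (m + n)) :=
  SimpleGraph.fromRel (fun i j =>
    ((i : ℕ) < m ∧ (j : ℕ) < m) ∨ (m ≤ (i : ℕ) ∧ m ≤ (j : ℕ)) ∨
      ((i : ℕ) + 1 = m ∧ (j : ℕ) = m))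

instance (m n : ℕ) : DecidableRel (bridgeGraph m n).Adj := fun i j =>
  decidable_of_iff (i ≠ j ∧
      ((((i : ℕ) < m ∧ (j : ℕ) < m) ∨ (m ≤ (i : ℕ) ∧ m ≤ (j : ℕ)) ∨
        ((i : ℕ) + 1 = m ∧ (j : ℕ) = m)) ∨
       (((j : ℕ) < m ∧ (i : ℕ) < m) ∨ (m ≤ (j : ℕ) ∧ m ≤ (i : ℕ)) ∨
        ((j : ℕ) + 1 = m ∧ (i : ℕ) = m)))) Iff.rfl

/-!
Let `s = (e_v, -e_w)` be supported on the two bridge vertices. Expanding `s sᵀ` shows that the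
adjacency matrix of two graphs joined by a bridge `vw` is the block diagonal matrix of the two
graphs with loops attached at `v` and `w`, minus `s sᵀ`. A complete graph with one loop has an
explicit inverse, so the Sherman-Morrison formula applies. Away from the bridge vertices the
inverse `C` of the block diagonal matrix is `-1`, and the rank-one correction
`(C s) (C s)ᵀ / (m + n - 3)` has entries `± 1 / (m + n - 3)` since `C s` is `1` on one side of the
bridge and `-1` on the other.
-/

open Matrix SimpleGraph

section ShermanMorrison

variable {K ι : Type*} [Field K] [Fintype ι] [DecidableEq ι]

theorem sub_vecMulVec_mul_eq_one {B C : Matrix ι ι K} {s t : ι → K} (hBC : B * C = 1)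
    (hd : 1 - t ⬝ᵥ C *ᵥ s ≠ 0) :
    (B - vecMulVec s t) *
      (C + (1 - t ⬝ᵥ C *ᵥ s)⁻¹ • vecMulVec (C *ᵥ s) (t ᵥ* C)) = 1 := by
  set d := 1 - t ⬝ᵥ C *ᵥ s with hd_def
  have mul_C : (B - vecMulVec s t) * C = 1 - vecMulVec s (t ᵥ* C) := by
    rw [sub_mul, hBC, vecMulVec_mul]
  have mulVec_Cs : (B - vecMulVec s t) *ᵥ (C *ᵥ s) = d • s := by
    rw [sub_mulVec, mulVec_mulVec, hBC, one_mulVec, vecMulVec_mulVec, op_smul_eq_smul, hd_def,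
      sub_smul, one_smul]
  rw [mul_add, mul_C, mul_smul_comm, mul_vecMulVec, mulVec_Cs, smul_vecMulVec,
    inv_smul_smul₀ hd, sub_add_cancel]

end ShermanMorrison

section BridgeSum

variable {V W : Type*}

/-- The disjoint sum of `G` and `H` with one additional edge, the bridge joining the vertex `v`
of `G` to the vertex `w` of `H`. -/
def bridgeSum (G : SimpleGraph V) (H : SimpleGraph W) (v : V) (w : W) : SimpleGraph (V ⊕ W) :=
  (G ⊕g H) ⊔ edge (Sum.inl v) (Sum.inr w)

variable (G : SimpleGraph V) (H : SimpleGraph W) (v : V) (w : W)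

@[simp]
theorem bridgeSum_adj_inl_inl {i j : V} :
    (bridgeSum G H v w).Adj (.inl i) (.inl j) ↔ G.Adj i j := by
  simp [bridgeSum, edge_adj]

@[simp]
theorem bridgeSum_adj_inr_inr {i j : W} :
    (bridgeSum G H v w).Adj (.inr i) (.inr j) ↔ H.Adj i j := by
  simp [bridgeSum, edge_adj]

@[simp]
theorem bridgeSum_adj_inl_inr {i : V} {j : W} :
    (bridgeSum G H v w).Adj (.inl i) (.inr j) ↔ i = v ∧ j = w := by
  simp [bridgeSum, edge_adj]

@[simp]
theorem bridgeSum_adj_inr_inl {i : W} {j : V} :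
    (bridgeSum G H v w).Adj (.inr i) (.inl j) ↔ i = w ∧ j = v := by
  simp [bridgeSum, edge_adj]

variable (K : Type*) [DecidableEq V] [DecidableEq W]
  [DecidableRel G.Adj] [DecidableRel H.Adj] [DecidableRel (bridgeSum G H v w).Adj]

/-- The adjacency matrix of `G` with a loop attached at the vertex `v`. -/
def loopedAdjMatrix [AddMonoidWithOne K] : Matrix V V K :=
  G.adjMatrix K + single v v 1

theorem adjMatrix_bridgeSum [Ring K] :
    (bridgeSum G H v w).adjMatrix K =
      fromBlocks (loopedAdjMatrix G v K) 0 0 (loopedAdjMatrix H w K) -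
        vecMulVec (Sum.elim (Pi.single v 1) (-Pi.single w 1))
          (Sum.elim (Pi.single v 1) (-Pi.single w 1)) := by
  ext (i | i) (j | j) <;>
    simp only [adjMatrix_apply, bridgeSum_adj_inl_inl, bridgeSum_adj_inl_inr,
      bridgeSum_adj_inr_inl, bridgeSum_adj_inr_inr, loopedAdjMatrix, Matrix.sub_apply,
      Matrix.add_apply, Matrix.zero_apply, fromBlocks_apply₁₁, fromBlocks_apply₁₂,
      fromBlocks_apply₂₁, fromBlocks_apply₂₂, single_apply, vecMulVec_apply, Sum.elim_inl,
      Sum.elim_inr, Pi.neg_apply, Pi.single_apply, mul_neg, mul_ite, mul_one,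
      mul_zero] <;>
    grind

variable {K} [Fintype V] [Fintype W] [Field K]

theorem adjMatrix_bridgeSum_mul_eq_one {C : Matrix V V K} {D : Matrix W W K}
    (hC : loopedAdjMatrix G v K * C = 1) (hD : loopedAdjMatrix H w K * D = 1)
    (hd : 1 - (C v v + D w w) ≠ 0) :
    (bridgeSum G H v w).adjMatrix K *
      (fromBlocks C 0 0 D + (1 - (C v v + D w w))⁻¹ •
        vecMulVec (Sum.elim (C.col v) (-D.col w)) (Sum.elim (C.row v) (-D.row w))) = 1 := by
  set s : V ⊕ W → K := Sum.elim (Pi.single v 1) (-Pi.single w 1) with hs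
  have hCD : fromBlocks (loopedAdjMatrix G v K) 0 0 (loopedAdjMatrix H w K) *
      fromBlocks C 0 0 D = 1 := by
    simp [fromBlocks_multiply, hC, hD]
  have mulVec_s : fromBlocks C 0 0 D *ᵥ s = Sum.elim (C.col v) (-D.col w) := by
    ext (i | i) <;> simp [hs, fromBlocks_mulVec, mulVec_neg]
  have s_vecMul : s ᵥ* fromBlocks C 0 0 D = Sum.elim (C.row v) (-D.row w) := by
    simp [hs, vecMul_fromBlocks, neg_vecMul]
  have dot_s : s ⬝ᵥ fromBlocks C 0 0 D *ᵥ s = C v v + D w w := by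
    rw [mulVec_s]
    simp [hs, sumElim_dotProduct_sumElim]
  rw [adjMatrix_bridgeSum, ← mulVec_s, ← s_vecMul, ← dot_s]
  exact sub_vecMulVec_mul_eq_one hCD (dot_s ▸ hd)

end BridgeSum

section LoopedClique

variable {V : Type*} (K : Type*) [Fintype V] [DecidableEq V] (v : V)

/-- The inverse of the adjacency matrix of the complete graph on `V` with a loop at `v`: it is `-1`
on the vertices other than `v`, its row and column of `v` consist of ones, and its entry at `v` is
`2 - |V|`. -/
def loopedCliqueInv [CommRing K] : Matrix V V K :=
  vecMulVec 1 (Pi.single v 1) + vecMulVec (Pi.single v 1) 1 -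
    ((Fintype.card V : K) - 1) • vecMulVec (Pi.single v 1) (Pi.single v 1) - 1

theorem loopedAdjMatrix_top_mul_loopedCliqueInv [CommRing K] :
    loopedAdjMatrix (⊤ : SimpleGraph V) v K * loopedCliqueInv K v = 1 := by
  have looped_eq : loopedAdjMatrix (⊤ : SimpleGraph V) v K =
      vecMulVec 1 1 + vecMulVec (Pi.single v 1) (Pi.single v 1) - 1 := by
    ext i j
    simp only [loopedAdjMatrix, adjMatrix_top, Matrix.sub_apply, Matrix.add_apply, of_apply,
      single_apply, vecMulVec_apply, Pi.one_apply, Pi.single_apply, one_apply]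
    grind
  rw [looped_eq, loopedCliqueInv]
  simp only [mul_add, add_mul, mul_sub, sub_mul, mul_smul_comm, mul_one, one_mul,
    vecMulVec_mul_vecMulVec, vecMulVec_smul, one_dotProduct_one, single_one_dotProduct,
    dotProduct_single_one, Pi.one_apply, Pi.single_eq_same]
  module

theorem loopedCliqueInv_apply_self [CommRing K] :
    loopedCliqueInv K v v v = 2 - Fintype.card V := by
  simp only [loopedCliqueInv, Matrix.sub_apply, Matrix.add_apply, Matrix.smul_apply,
    vecMulVec_apply, Pi.one_apply, Pi.single_eq_same, one_apply_eq, smul_eq_mul]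
  ring

theorem loopedCliqueInv_apply_of_ne_left [CommRing K] {i : V} (hi : i ≠ v) :
    loopedCliqueInv K v i v = 1 := by
  simp [loopedCliqueInv, vecMulVec_apply, hi]

theorem loopedCliqueInv_apply_of_ne_right [CommRing K] {j : V} (hj : j ≠ v) :
    loopedCliqueInv K v v j = 1 := by
  simp [loopedCliqueInv, vecMulVec_apply, hj, hj.symm]

theorem loopedCliqueInv_apply_of_ne_of_ne [CommRing K] {i j : V} (hi : i ≠ v) (hj : j ≠ v) :
    loopedCliqueInv K v i j = -(1 : Matrix V V K) i j := by
  simp [loopedCliqueInv, vecMulVec_apply, hi, hj]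

end LoopedClique

section CompleteBridge

variable {K V W : Type*} [Field K] [Fintype V] [Fintype W] [DecidableEq V] [DecidableEq W]
  {v : V} {w : W} [DecidableRel (bridgeSum (⊤ : SimpleGraph V) (⊤ : SimpleGraph W) v w).Adj]

theorem adjMatrix_bridgeSum_top_mul_eq_one
    (hd : (Fintype.card V : K) + Fintype.card W - 3 ≠ 0) :
    (bridgeSum (⊤ : SimpleGraph V) (⊤ : SimpleGraph W) v w).adjMatrix K *
      (fromBlocks (loopedCliqueInv K v) 0 0 (loopedCliqueInv K w) +
        ((Fintype.card V : K) + Fintype.card W - 3)⁻¹ •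
          vecMulVec (Sum.elim ((loopedCliqueInv K v).col v) (-(loopedCliqueInv K w).col w))
            (Sum.elim ((loopedCliqueInv K v).row v) (-(loopedCliqueInv K w).row w))) = 1 := by
  have denominator_eq : (Fintype.card V : K) + Fintype.card W - 3 =
      1 - (loopedCliqueInv K v v v + loopedCliqueInv K w w w) := by
    rw [loopedCliqueInv_apply_self, loopedCliqueInv_apply_self]
    ring
  rw [denominator_eq] at hd ⊢
  exact adjMatrix_bridgeSum_mul_eq_one _ _ v w (loopedAdjMatrix_top_mul_loopedCliqueInv K v)
    (loopedAdjMatrix_top_mul_loopedCliqueInv K w) hd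

theorem inv_adjMatrix_bridgeSum_top_apply_of_ne
    (hd : (Fintype.card V : K) + Fintype.card W - 3 ≠ 0) {i j : V ⊕ W}
    (hiv : i ≠ .inl v) (hiw : i ≠ .inr w) (hjv : j ≠ .inl v) (hjw : j ≠ .inr w) :
    ((bridgeSum (⊤ : SimpleGraph V) (⊤ : SimpleGraph W) v w).adjMatrix K)⁻¹ i j =
      Sum.elim (1 : V → K) (-1 : W → K) i * Sum.elim (1 : V → K) (-1 : W → K) j /
          ((Fintype.card V : K) + Fintype.card W - 3) -
        (1 : Matrix (V ⊕ W) (V ⊕ W) K) i j := by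
  rw [inv_eq_right_inv (adjMatrix_bridgeSum_top_mul_eq_one hd)]
  have block_entry : fromBlocks (loopedCliqueInv K v) 0 0 (loopedCliqueInv K w) i j =
      -(1 : Matrix (V ⊕ W) (V ⊕ W) K) i j := by
    rcases i with i | i <;> rcases j with j | j <;>
      simp_all [loopedCliqueInv_apply_of_ne_of_ne, one_apply]
  have col_entry : Sum.elim ((loopedCliqueInv K v).col v) (-(loopedCliqueInv K w).col w) i =
      Sum.elim (1 : V → K) (-1 : W → K) i := by
    rcases i with i | i <;> simp_all [loopedCliqueInv_apply_of_ne_left]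
  have row_entry : Sum.elim ((loopedCliqueInv K v).row v) (-(loopedCliqueInv K w).row w) j =
      Sum.elim (1 : V → K) (-1 : W → K) j := by
    rcases j with j | j <;> simp_all [loopedCliqueInv_apply_of_ne_right]
  rw [Matrix.add_apply, Matrix.smul_apply, vecMulVec_apply, block_entry, col_entry, row_entry,
    smul_eq_mul]
  ring

end CompleteBridge

theorem inv_adjMatrix_apply_of_iso {K V W : Type*} [CommRing K] [Fintype V] [Fintype W]
    [DecidableEq V] [DecidableEq W] {G : SimpleGraph V} {H : SimpleGraph W}
    [DecidableRel G.Adj] [DecidableRel H.Adj] (f : G ≃g H) (i j : V) :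
    (H.adjMatrix K)⁻¹ (f i) (f j) = (G.adjMatrix K)⁻¹ i j := by
  rw [← f.reindex_adjMatrix K, inv_reindex]
  simp

section BridgeGraph

variable {m n : ℕ}

/-- The complete bridge graph as two complete graphs, on `Fin m` and on `Fin n`, bridged from the
last vertex of the former to the first vertex of the latter. -/
@[simps! apply]
def bridgeSumIsoBridgeGraph (hm : 1 ≤ m) (hn : 1 ≤ n) :
    bridgeSum (⊤ : SimpleGraph (Fin m)) (⊤ : SimpleGraph (Fin n))
      ⟨m - 1, Nat.sub_one_lt_of_lt hm⟩ ⟨0, hn⟩ ≃g bridgeGraph m n where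
  toEquiv := finSumFinEquiv
  map_rel_iff' {i j} := by
    rcases i with i | i <;> rcases j with j | j <;>
      simp only [bridgeGraph, fromRel_adj, finSumFinEquiv_apply_left, finSumFinEquiv_apply_right,
        bridgeSum_adj_inl_inl, bridgeSum_adj_inl_inr, bridgeSum_adj_inr_inl,
        bridgeSum_adj_inr_inr, top_adj, ne_eq, Fin.ext_iff, Fin.val_castAdd, Fin.val_natAdd] <;>
      omega

variable {K : Type*} [Field K]

theorem isUnit_det_adjMatrix_bridgeGraph (hm : 1 ≤ m) (hn : 1 ≤ n) (hd : (m : K) + n - 3 ≠ 0) :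
    IsUnit ((bridgeGraph m n).adjMatrix K).det := by
  classical
  rw [← (bridgeSumIsoBridgeGraph hm hn).reindex_adjMatrix K, det_reindex_self]
  exact isUnit_det_of_right_inverse (adjMatrix_bridgeSum_top_mul_eq_one (by simpa using hd))

theorem inv_adjMatrix_bridgeGraph_apply_of_ne (hm : 1 ≤ m) (hn : 1 ≤ n)
    (hd : (m : K) + n - 3 ≠ 0) {i j : Fin (m + n)}
    (hi : (i : ℕ) + 2 ≤ m ∨ m + 1 ≤ (i : ℕ)) (hj : (j : ℕ) + 2 ≤ m ∨ m + 1 ≤ (j : ℕ)) :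
    ((bridgeGraph m n).adjMatrix K)⁻¹ i j =
      (if (i : ℕ) < m then 1 else -1) * (if (j : ℕ) < m then 1 else -1) / ((m : K) + n - 3) -
        if i = j then 1 else 0 := by
  classical
  set f := bridgeSumIsoBridgeGraph hm hn
  have sign_eq (x : Fin m ⊕ Fin n) : Sum.elim (1 : Fin m → K) (-1 : Fin n → K) x =
      if (f x : ℕ) < m then 1 else -1 := by
    rcases x with x | x <;> simp [f]
  have ne_bridge {x : Fin m ⊕ Fin n} (hx : (f x : ℕ) + 2 ≤ m ∨ m + 1 ≤ (f x : ℕ)) :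
      x ≠ .inl ⟨m - 1, Nat.sub_one_lt_of_lt hm⟩ ∧ x ≠ .inr ⟨0, hn⟩ := by
    constructor <;> rintro rfl <;>
      simp only [f, bridgeSumIsoBridgeGraph_apply, Sum.elim_inl, Sum.elim_inr, Fin.val_castAdd,
        Fin.val_natAdd] at hx <;> omega
  obtain ⟨i, rfl⟩ := f.surjective i
  obtain ⟨j, rfl⟩ := f.surjective j
  rw [inv_adjMatrix_apply_of_iso, inv_adjMatrix_bridgeSum_top_apply_of_ne (by simpa using hd)
    (ne_bridge hi).1 (ne_bridge hi).2 (ne_bridge hj).1 (ne_bridge hj).2, sign_eq, sign_eq]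
  simp only [Fintype.card_fin, one_apply, EmbeddingLike.apply_eq_iff_eq]

end BridgeGraph

theorem inv_adjMatrix_bridgeGraph_entries_general {K : Type*} [Field K] (m n : ℕ) (hm : 1 ≤ m)
    (hn : 1 ≤ n) (hd : (m : K) + (n : K) - 3 ≠ 0) :
    IsUnit ((bridgeGraph m n).adjMatrix K).det ∧
    (∀ i j : Fin (m + n), i = j → ((i : ℕ) + 2 ≤ m ∨ m + 1 ≤ (i : ℕ)) →
      ((bridgeGraph m n).adjMatrix K)⁻¹ i j =
        -(((m : K) + (n : K) - 4) / ((m : K) + (n : K) - 3))) ∧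
    (∀ i j : Fin (m + n), i ≠ j →
      (((i : ℕ) + 2 ≤ m ∧ (j : ℕ) + 2 ≤ m) ∨ (m + 1 ≤ (i : ℕ) ∧ m + 1 ≤ (j : ℕ))) →
      ((bridgeGraph m n).adjMatrix K)⁻¹ i j = 1 / ((m : K) + (n : K) - 3)) ∧
    (∀ i j : Fin (m + n),
      (((i : ℕ) + 2 ≤ m ∧ m + 1 ≤ (j : ℕ)) ∨ (m + 1 ≤ (i : ℕ) ∧ (j : ℕ) + 2 ≤ m)) →
      ((bridgeGraph m n).adjMatrix K)⁻¹ i j = -(1 / ((m : K) + (n : K) - 3))) := by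
  refine ⟨isUnit_det_adjMatrix_bridgeGraph hm hn hd, ?_, ?_, ?_⟩
  · rintro i _ rfl hi
    rw [inv_adjMatrix_bridgeGraph_apply_of_ne hm hn hd hi hi, if_pos rfl]
    split_ifs <;> field_simp <;> ring
  · intro i j hij h
    rw [inv_adjMatrix_bridgeGraph_apply_of_ne hm hn hd (by omega) (by omega), if_neg hij]
    rcases h with ⟨hi, hj⟩ | ⟨hi, hj⟩
    · rw [if_pos (by omega), if_pos (by omega), one_mul, sub_zero]
    · rw [if_neg (by omega), if_neg (by omega), neg_mul_neg, one_mul, sub_zero]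
  · intro i j h
    have hij : i ≠ j := by omega
    rw [inv_adjMatrix_bridgeGraph_apply_of_ne hm hn hd (by omega) (by omega), if_neg hij]
    rcases h with ⟨hi, hj⟩ | ⟨hi, hj⟩
    · rw [if_pos (by omega), if_neg (by omega), one_mul, sub_zero, neg_div]
    · rw [if_neg (by omega), if_pos (by omega), mul_one, sub_zero, neg_div]

/-- Let `m ≥ n ≥ 2`. Then `A(B_{m,n})` is invertible, and writing `a_{ij}`
for the entries of its inverse (with the paper's 1-indexed vertices `1, …, m+n` corresponding
to `Fin (m+n)`, so that a paper index `p` corresponds to the Lean index with value `p - 1`):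
(i) `a_{ij} = −(m+n−4)/(m+n−3)` on the diagonal positions with paper index in
`{1, …, m−1}` (Lean: `i+2 ≤ m`) or in `{m+2, …, m+n}` (Lean: `m+1 ≤ i`);
(ii) `a_{ij} = 1/(m+n−3)` for off-diagonal positions with both indices in `{1, …, m−1}`
or both in `{m+2, …, m+n}`;
(iii) `a_{ij} = −1/(m+n−3)` when one index is in `{1, …, m−1}` and the other in
`{m+2, …, m+n}`. -/
theorem inv_adjMatrix_bridgeGraph_entries (m n : ℕ) (hn : 2 ≤ n) (hnm : n ≤ m) :
    IsUnit ((bridgeGraph m n).adjMatrix ℝ).det ∧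
    (∀ i j : Fin (m + n), i = j → ((i : ℕ) + 2 ≤ m ∨ m + 1 ≤ (i : ℕ)) →
      ((bridgeGraph m n).adjMatrix ℝ)⁻¹ i j =
        -(((m : ℝ) + (n : ℝ) - 4) / ((m : ℝ) + (n : ℝ) - 3))) ∧
    (∀ i j : Fin (m + n), i ≠ j →
      (((i : ℕ) + 2 ≤ m ∧ (j : ℕ) + 2 ≤ m) ∨ (m + 1 ≤ (i : ℕ) ∧ m + 1 ≤ (j : ℕ))) →
      ((bridgeGraph m n).adjMatrix ℝ)⁻¹ i j = 1 / ((m : ℝ) + (n : ℝ) - 3)) ∧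
    (∀ i j : Fin (m + n),
      (((i : ℕ) + 2 ≤ m ∧ m + 1 ≤ (j : ℕ)) ∨ (m + 1 ≤ (i : ℕ) ∧ (j : ℕ) + 2 ≤ m)) →
      ((bridgeGraph m n).adjMatrix ℝ)⁻¹ i j = -(1 / ((m : ℝ) + (n : ℝ) - 3))) := by
  have two_le_n : (2 : ℝ) ≤ n := mod_cast hn
  have two_le_m : (2 : ℝ) ≤ m := mod_cast hn.trans hnm
  exact inv_adjMatrix_bridgeGraph_entries_general m n (by omega) (by omega) (by linarith)
end

section
/- For every integer m > 2, the number m − 2 is an eigenvalue of the adjacency matrix A(B_{m,m−1}), and it is the second largest eigenvalue: exactly one eigenvalue of A(B_{m,m−1}), counted with multiplicity, is strictly greater than m − 2. -/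
/-!
By the spectral theorem and Sylvester's law of inertia, the number of eigenvalues of a real
symmetric matrix `A` above `t` is the positive index of inertia of `x ↦ xᵀAx - t xᵀx`. For the
bridge graph, `xᵀAx = (∑ u)² - ∑ u² + (∑ v)² - ∑ v² + 2 u_a v_b`, where `u`, `v` are the
restrictions of `x` to `K_m`, `K_n` and `ab` is the bridge. Take `t = m - 2` and `n < m`. On the
hyperplane `u_a = 0` at most `m - 1` coordinates of `u` and of `v` are nonzero, so Cauchy–Schwarz
makes the form nonpositive and the index is at most one; the indicator of `K_m` shows that it is at
least one. For `n = m - 1`, the vector `u = 1 - e_a`, `v = -n` is an eigenvector with eigenvalue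
`m - 2`.
-/

open Matrix QuadraticMap QuadraticForm

section Signature

variable {𝕜 M N : Type*} [Field 𝕜] [LinearOrder 𝕜] [AddCommGroup M] [Module 𝕜 M]
  [FiniteDimensional 𝕜 M] {Q : QuadraticForm 𝕜 M}

lemma sigPos_le_finrank_range_of_nonpos_on_ker [AddCommGroup N] [Module 𝕜 N] (f : M →ₗ[𝕜] N)
    (hf : ∀ x, f x = 0 → Q x ≤ 0) : sigPos Q ≤ Module.finrank 𝕜 (LinearMap.range f) := by
  have hker := sigPos_add_finrank_le_of_nonpos (Q := Q) (V := LinearMap.ker f) hf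
  have hrank := f.finrank_range_add_finrank_ker
  lia

lemma sigPos_pos_of_apply_pos [IsStrictOrderedRing 𝕜] {x : M} (hx : 0 < Q x) : 0 < sigPos Q := by
  have hx0 : x ≠ 0 := by
    rintro rfl
    simp at hx
  have hpos : (Q.restrict (Submodule.span 𝕜 {x})).PosDef := by
    rintro ⟨y, hy⟩ hy0
    obtain ⟨c, rfl⟩ := Submodule.mem_span_singleton.mp hy
    have hc : c ≠ 0 := by
      rintro rfl
      simp at hy0
    rw [restrict_apply, QuadraticMap.map_smul]
    exact mul_pos (mul_self_pos.mpr hc) hx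
  calc 0 < 1 := one_pos
    _ = Module.finrank 𝕜 (Submodule.span 𝕜 {x}) := (finrank_span_singleton hx0).symm
    _ ≤ sigPos Q := le_sigPos_of_posDef Q hpos

end Signature

section Matrix

variable {ι R : Type*} [Fintype ι] [DecidableEq ι]

lemma toQuadraticForm'_apply [CommRing R] (A : Matrix ι ι R) (x : ι → R) :
    A.toQuadraticForm' x = x ⬝ᵥ A *ᵥ x :=
  toLinearMap₂'_apply' A x x

lemma toQuadraticForm'_sub_scalar_apply [CommRing R] (A : Matrix ι ι R) (t : R) (x : ι → R) :
    (A - scalar ι t).toQuadraticForm' x = x ⬝ᵥ A *ᵥ x - t * (x ⬝ᵥ x) := by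
  have hscalar : scalar ι t *ᵥ x = t • x := by
    ext i
    rw [scalar_apply, mulVec_diagonal, Pi.smul_apply, smul_eq_mul]
  rw [toQuadraticForm'_apply, sub_mulVec, dotProduct_sub, hscalar, dotProduct_smul, smul_eq_mul]

lemma isRoot_charpoly_of_mulVec_eq_smul [CommRing R] [IsDomain R] {A : Matrix ι ι R} {μ : R}
    {x : ι → R} (hx : x ≠ 0) (h : A *ᵥ x = μ • x) : A.charpoly.IsRoot μ := by
  rw [Polynomial.IsRoot, eval_charpoly, ← exists_mulVec_eq_zero_iff]
  refine ⟨x, hx, ?_⟩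
  ext i
  rw [sub_mulVec, h, Pi.sub_apply, scalar_apply, mulVec_diagonal, Pi.smul_apply, smul_eq_mul,
    sub_self, Pi.zero_apply]

variable {A : Matrix ι ι ℝ}

lemma equivalent_weightedSumSquares_eigenvalues (hA : A.IsHermitian) :
    A.toQuadraticForm'.Equivalent (weightedSumSquares ℝ hA.eigenvalues) := by
  let U := hA.eigenvectorUnitary
  refine ⟨UnitaryGroup.toLinearEquiv (star U), fun x ↦ ?_⟩
  have hU : x ᵥ* (U : Matrix ι ι ℝ) = star (U : Matrix ι ι ℝ) *ᵥ x := by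
    rw [star_eq_conjTranspose, conjTranspose_eq_transpose_of_trivial, mulVec_transpose]
  calc weightedSumSquares ℝ hA.eigenvalues (star (U : Matrix ι ι ℝ) *ᵥ x)
    _ = (x ᵥ* (U : Matrix ι ι ℝ)) ⬝ᵥ
        diagonal hA.eigenvalues *ᵥ (star (U : Matrix ι ι ℝ) *ᵥ x) := by
      rw [hU, weightedSumSquares_apply]
      exact Finset.sum_congr rfl fun i _ ↦ by rw [mulVec_diagonal, smul_eq_mul]; ring
    _ = x ⬝ᵥ ((U : Matrix ι ι ℝ) * diagonal hA.eigenvalues * star (U : Matrix ι ι ℝ)) *ᵥ x := by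
      rw [← dotProduct_mulVec, mulVec_mulVec, mulVec_mulVec]
    _ = A.toQuadraticForm' x := by
      rw [toQuadraticForm'_apply]
      exact congrArg (x ⬝ᵥ · *ᵥ x) hA.spectral_theorem.symm

lemma card_filter_pos_roots_charpoly (hA : A.IsHermitian) :
    (A.charpoly.roots.filter (0 < ·)).card = sigPos A.toQuadraticForm' := by
  rw [sigPos_of_equiv_weightedSumSquares (equivalent_weightedSumSquares_eigenvalues hA),
    Set.ncard_eq_toFinset_card', Set.toFinset_ofPred, hA.roots_charpoly_eq_eigenvalues,
    Multiset.filter_map, Multiset.card_map]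
  rfl

lemma card_filter_lt_roots_charpoly (hA : A.IsHermitian) (t : ℝ) :
    (A.charpoly.roots.filter (t < ·)).card = sigPos (A - scalar ι t).toQuadraticForm' := by
  have hAt : (A - scalar ι t).IsHermitian := hA.sub (isHermitian_diagonal _)
  rw [← card_filter_pos_roots_charpoly hAt, charpoly_sub_scalar,
    ← A.charpoly.map_roots_comp_C_mul_X_add_C 1 t isUnit_one, Multiset.filter_map,
    Multiset.card_map]
  simp

end Matrix

lemma sq_sum_le_card_sub_one_mul_sum_sq {ι R : Type*} [CommRing R] [LinearOrder R]
    [IsStrictOrderedRing R] {s : Finset ι} {f : ι → R} {a : ι} (ha : a ∈ s) (hfa : f a = 0) :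
    (∑ i ∈ s, f i) ^ 2 ≤ (s.card - 1) * ∑ i ∈ s, f i ^ 2 := by
  classical
  have hcard : ((s.erase a).card : R) = s.card - 1 := by
    rw [Finset.card_erase_of_mem ha, Nat.cast_pred (Finset.card_pos.mpr ⟨a, ha⟩)]
  have hcauchy := sq_sum_le_card_mul_sum_sq (s := s.erase a) (f := f)
  rwa [hcard, Finset.sum_erase s hfa, Finset.sum_erase s (by simp [hfa])] at hcauchy

section CompleteGraph

variable {α R : Type*} [Fintype α] [DecidableEq α] [CommRing R]

lemma adjMatrix_top_mulVec_apply (u : α → R) (i : α) :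
    ((⊤ : SimpleGraph α).adjMatrix R *ᵥ u) i = ∑ j, u j - u i := by
  rw [SimpleGraph.adjMatrix_mulVec_apply, SimpleGraph.neighborFinset_top,
    Fintype.sum_eq_add_sum_compl i, add_sub_cancel_left]

lemma dotProduct_adjMatrix_top_mulVec (u : α → R) :
    u ⬝ᵥ (⊤ : SimpleGraph α).adjMatrix R *ᵥ u = (∑ i, u i) ^ 2 - ∑ i, u i ^ 2 := by
  simp only [dotProduct, adjMatrix_top_mulVec_apply, mul_sub, Finset.sum_sub_distrib,
    ← Finset.sum_mul, ← pow_two]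

end CompleteGraph

section BridgeMatrix

variable {α β : Type*} [DecidableEq α] [DecidableEq β]

/-- The adjacency matrix, in block form, of the graph obtained from the complete graphs on `α` and
`β` by adding the bridge edge between `a` and `b`. -/
def bridgeMatrix (R : Type*) [Zero R] [One R] (a : α) (b : β) : Matrix (α ⊕ β) (α ⊕ β) R :=
  fromBlocks ((⊤ : SimpleGraph α).adjMatrix R) (single a b 1)
    (single b a 1) ((⊤ : SimpleGraph β).adjMatrix R)

lemma isHermitian_bridgeMatrix (R : Type*) [NonAssocSemiring R] [StarRing R] (a : α) (b : β) :
    (bridgeMatrix R a b).IsHermitian :=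
  IsHermitian.fromBlocks (SimpleGraph.isHermitian_adjMatrix R _) (by simp)
    (SimpleGraph.isHermitian_adjMatrix R _)

variable [Fintype α] [Fintype β]

lemma bridgeMatrix_mulVec_sumElim {R : Type*} [CommRing R] (a : α) (b : β) (u : α → R)
    (v : β → R) :
    bridgeMatrix R a b *ᵥ Sum.elim u v =
      Sum.elim ((⊤ : SimpleGraph α).adjMatrix R *ᵥ u + Pi.single a (v b))
        ((⊤ : SimpleGraph β).adjMatrix R *ᵥ v + Pi.single b (u a)) := by
  rw [bridgeMatrix, fromBlocks_mulVec, Sum.elim_comp_inl, Sum.elim_comp_inr, single_mulVec,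
    single_mulVec, one_mul, one_mul, add_comm (Function.update _ _ _)]
  rfl

lemma dotProduct_bridgeMatrix_mulVec {R : Type*} [CommRing R] (a : α) (b : β) (u : α → R)
    (v : β → R) :
    Sum.elim u v ⬝ᵥ bridgeMatrix R a b *ᵥ Sum.elim u v =
      ((∑ i, u i) ^ 2 - ∑ i, u i ^ 2) + ((∑ j, v j) ^ 2 - ∑ j, v j ^ 2) + 2 * (u a * v b) := by
  rw [bridgeMatrix_mulVec_sumElim, sumElim_dotProduct_sumElim, dotProduct_add, dotProduct_add,
    dotProduct_adjMatrix_top_mulVec, dotProduct_adjMatrix_top_mulVec, dotProduct_single,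
    dotProduct_single]
  ring

lemma isRoot_charpoly_bridgeMatrix (R : Type*) [CommRing R] [IsDomain R] (a : α) (b : β)
    (h : Fintype.card α = Fintype.card β + 1) :
    (bridgeMatrix R a b).charpoly.IsRoot (Fintype.card α - 2) := by
  have hβ : 0 < Fintype.card β := Fintype.card_pos_iff.mpr ⟨b⟩
  have : Nontrivial α := Fintype.one_lt_card_iff_nontrivial.mp (by lia)
  obtain ⟨a', ha'⟩ := exists_ne a
  have hα : (Fintype.card α : R) = Fintype.card β + 1 := by rw [h, Nat.cast_succ]
  let u : α → R := 1 - Pi.single a 1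
  let v : β → R := fun _ ↦ -Fintype.card β
  have hu : ∑ i, u i = Fintype.card β := by simp [u, h]
  have hv : ∑ j, v j = -(Fintype.card β : R) ^ 2 := by simp [v, pow_two]
  have hua : u a = 0 := by simp [u]
  have hui : ∀ i ≠ a, u i = 1 := fun i hi ↦ by simp [u, hi]
  have huv : Sum.elim u v ≠ 0 := fun h0 ↦
    one_ne_zero ((hui a' ha').symm.trans (congrFun h0 (Sum.inl a')))
  refine isRoot_charpoly_of_mulVec_eq_smul huv ?_
  rw [bridgeMatrix_mulVec_sumElim]
  ext (i | j)
  · simp only [Sum.elim_inl, Pi.add_apply, Pi.smul_apply, adjMatrix_top_mulVec_apply, hu,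
      smul_eq_mul]
    rcases eq_or_ne i a with rfl | hi
    · rw [hua, Pi.single_eq_same]
      ring
    · rw [hui i hi, Pi.single_eq_of_ne hi, hα]
      ring
  · simp only [Sum.elim_inr, Pi.add_apply, Pi.smul_apply, adjMatrix_top_mulVec_apply, hv, hua,
      Pi.single_zero, Pi.zero_apply, smul_eq_mul, hα, v]
    ring

variable {a : α}

lemma dotProduct_bridgeMatrix_mulVec_le (b : β) (h : Fintype.card β < Fintype.card α)
    {x : α ⊕ β → ℝ} (hx : x (Sum.inl a) = 0) :
    x ⬝ᵥ bridgeMatrix ℝ a b *ᵥ x ≤ (Fintype.card α - 2) * (x ⬝ᵥ x) := by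
  obtain ⟨u, v, rfl⟩ : ∃ u v, x = Sum.elim u v := ⟨_, _, (Sum.elim_comp_inl_inr x).symm⟩
  have hu : (∑ i, u i) ^ 2 ≤ (Fintype.card α - 1) * ∑ i, u i ^ 2 :=
    sq_sum_le_card_sub_one_mul_sum_sq (Finset.mem_univ a) hx
  have hv : (∑ j, v j) ^ 2 ≤ (Fintype.card α - 1) * ∑ j, v j ^ 2 := by
    have hcard : (Fintype.card β : ℝ) ≤ Fintype.card α - 1 := by
      rw [le_sub_iff_add_le]
      exact_mod_cast h
    calc (∑ j, v j) ^ 2 ≤ Fintype.card β * ∑ j, v j ^ 2 := sq_sum_le_card_mul_sum_sq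
      _ ≤ (Fintype.card α - 1) * ∑ j, v j ^ 2 := by gcongr
  have hua : u a = 0 := hx
  rw [dotProduct_bridgeMatrix_mulVec, hua, sumElim_dotProduct_sumElim]
  simp only [dotProduct, ← pow_two]
  linarith

lemma lt_dotProduct_bridgeMatrix_mulVec (a : α) (b : β) :
    (Fintype.card α - 2 : ℝ) * (Sum.elim (1 : α → ℝ) (0 : β → ℝ) ⬝ᵥ Sum.elim 1 0) <
      Sum.elim 1 0 ⬝ᵥ bridgeMatrix ℝ a b *ᵥ Sum.elim 1 0 := by
  have hcard : (0 : ℝ) < Fintype.card α := by exact_mod_cast Fintype.card_pos_iff.mpr ⟨a⟩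
  rw [dotProduct_bridgeMatrix_mulVec, sumElim_dotProduct_sumElim]
  simp only [dotProduct, Pi.one_apply, Pi.zero_apply, Finset.sum_const, Finset.card_univ,
    nsmul_eq_mul]
  linarith

lemma card_filter_lt_roots_charpoly_bridgeMatrix (a : α) (b : β)
    (h : Fintype.card β < Fintype.card α) :
    ((bridgeMatrix ℝ a b).charpoly.roots.filter ((Fintype.card α - 2 : ℝ) < ·)).card = 1 := by
  rw [card_filter_lt_roots_charpoly (isHermitian_bridgeMatrix ℝ a b)]
  refine le_antisymm ?_ ?_
  · let f : (α ⊕ β → ℝ) →ₗ[ℝ] ℝ := LinearMap.proj (Sum.inl a)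
    refine (sigPos_le_finrank_range_of_nonpos_on_ker f fun x hx ↦ ?_).trans
      ((Submodule.finrank_le _).trans_eq (Module.finrank_self ℝ))
    rw [toQuadraticForm'_sub_scalar_apply]
    exact sub_nonpos.mpr (dotProduct_bridgeMatrix_mulVec_le b h hx)
  · refine sigPos_pos_of_apply_pos (x := Sum.elim 1 0) ?_
    rw [toQuadraticForm'_sub_scalar_apply]
    exact sub_pos.mpr (lt_dotProduct_bridgeMatrix_mulVec a b)

end BridgeMatrix

section BridgeGraph

variable {m n : ℕ}

lemma bridgeGraph_adj_castAdd_castAdd {i j : Fin m} :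
    (bridgeGraph m n).Adj (Fin.castAdd n i) (Fin.castAdd n j) ↔ i ≠ j := by
  simp [bridgeGraph, Fin.ext_iff]

lemma bridgeGraph_adj_natAdd_natAdd {i j : Fin n} :
    (bridgeGraph m n).Adj (Fin.natAdd m i) (Fin.natAdd m j) ↔ i ≠ j := by
  simp [bridgeGraph, Fin.ext_iff]

lemma bridgeGraph_adj_castAdd_natAdd {i : Fin (m + 1)} {j : Fin (n + 1)} :
    (bridgeGraph (m + 1) (n + 1)).Adj (Fin.castAdd (n + 1) i) (Fin.natAdd (m + 1) j) ↔
      Fin.last m = i ∧ 0 = j := by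
  simp only [bridgeGraph, SimpleGraph.fromRel_adj, ne_eq, Fin.ext_iff, Fin.val_castAdd,
    Fin.val_natAdd, Fin.val_last, Fin.val_zero]
  lia

lemma adjMatrix_bridgeGraph (R : Type*) [Zero R] [One R] (m n : ℕ) :
    (bridgeGraph (m + 1) (n + 1)).adjMatrix R =
      reindex finSumFinEquiv finSumFinEquiv (bridgeMatrix R (Fin.last m) (0 : Fin (n + 1))) := by
  rw [← Equiv.symm_apply_eq]
  ext (i | i) (j | j)
  · simp [bridgeMatrix, SimpleGraph.adjMatrix_apply, bridgeGraph_adj_castAdd_castAdd]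
  · simp [bridgeMatrix, SimpleGraph.adjMatrix_apply, bridgeGraph_adj_castAdd_natAdd, single_apply]
  · simp [bridgeMatrix, SimpleGraph.adjMatrix_apply, SimpleGraph.adj_comm _ (Fin.natAdd _ _),
      bridgeGraph_adj_castAdd_natAdd, single_apply, and_comm]
  · simp [bridgeMatrix, SimpleGraph.adjMatrix_apply, bridgeGraph_adj_natAdd_natAdd]

end BridgeGraph

/-- For every integer `m > 2`, the number `m − 2` is an eigenvalue of the
adjacency matrix `A(B_{m,m−1})`, and it is the second largest eigenvalue: exactly one
eigenvalue of `A(B_{m,m−1})`, counted with multiplicity (as a root of the characteristic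
polynomial), is strictly greater than `m − 2`. -/
theorem second_largest_eigenvalue_bridgeGraph (m : ℕ) (hm : 2 < m) :
    ((bridgeGraph m (m - 1)).adjMatrix ℝ).charpoly.IsRoot ((m : ℝ) - 2) ∧
    (((bridgeGraph m (m - 1)).adjMatrix ℝ).charpoly.roots.filter
      (fun x => (m : ℝ) - 2 < x)).card = 1 := by
  obtain ⟨k, rfl⟩ : ∃ k, m = k + 2 := ⟨m - 2, by lia⟩
  have hcharpoly : ((bridgeGraph (k + 2) (k + 1)).adjMatrix ℝ).charpoly =
      (bridgeMatrix ℝ (Fin.last (k + 1)) (0 : Fin (k + 1))).charpoly := by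
    rw [adjMatrix_bridgeGraph, charpoly_reindex]
  rw [show k + 2 - 1 = k + 1 from rfl, hcharpoly]
  constructor
  · simpa only [Fintype.card_fin] using
      isRoot_charpoly_bridgeMatrix ℝ (Fin.last (k + 1)) (0 : Fin (k + 1)) (by simp)
  · simpa only [Fintype.card_fin] using
      card_filter_lt_roots_charpoly_bridgeMatrix (Fin.last (k + 1)) (0 : Fin (k + 1)) (by simp)
end

section
/- For every integer m > 2, the cubic x³ + (3−m)x² + (2−2m)x − 2 has three real roots θ₁ > θ₂ > θ₃ satisfying θ₁ > m−2 > 0 > θ₂ > −1 > θ₃, and the multiset of eigenvalues of the adjacency matrix A(B_{m,m−1}), counted with multiplicity, consists of θ₁, m−2, θ₂ and θ₃ each once, together with −1 with multiplicity 2m−5. -/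
/-!
Adding a bridge `vw` between graphs `G` and `H` changes the characteristic polynomial
`φ(G) φ(H)` of the disjoint union by `-φ(G - v) φ(H - w)`, since the bridge contributes to the
determinant only when both of its end rows pick it. As `φ(K_n) = (x + 1)^(n-1) (x + 1 - n)`, this
writes `φ(B_{m,n})` as a power of `x + 1` times a quartic. For `n = m - 1` the quartic has the
root `m - 2`, and the cofactor is a cubic whose signs at `-2, -1, 0, m - 2, m` locate its roots.
-/

open Matrix Polynomial SimpleGraph

section BridgedMatrix

variable {R m n : Type*} [CommRing R] [DecidableEq m] [DecidableEq n]

theorem neg_single (i : m) (j : n) (a : R) :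
    -Matrix.single i j a = Matrix.single i j (-a) :=
  (map_neg (singleAddMonoidHom i j) a).symm

variable [Fintype m] [Fintype n]

theorem det_updateRow_fromBlocks_zero_single (A : Matrix m m R) (D : Matrix n n R) (i : m) (j : n)
    (c : R) :
    ((fromBlocks A 0 (Matrix.single j i c) D).updateRow (.inl i) (Pi.single (.inr j) 1)).det =
      -(c * (A.adjugate i i * D.adjugate j j)) := by
  set N := (fromBlocks A 0 (Matrix.single j i c) D).updateRow (.inl i) (Pi.single (.inr j) 1)
    with hN
  -- Exchanging the two end rows of the bridge makes the matrix block triangular.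
  have swap_rows : N.submatrix (Equiv.swap (Sum.inl i) (Sum.inr j)) id =
      fromBlocks (A.updateRow i (c • Pi.single i 1)) (updateRow 0 i (D j)) 0
        (D.updateRow j (Pi.single j 1)) := by
    ext (k | k) l
    · obtain rfl | hk := eq_or_ne k i
      · cases l <;> simp [hN, Pi.single_apply, Matrix.single_apply, eq_comm]
      · cases l <;> simp [hN, hk, Equiv.swap_apply_of_ne_of_ne]
    · obtain rfl | hk := eq_or_ne k j
      · cases l <;> simp [hN, Pi.single_apply]
      · cases l <;> simp [hN, hk, hk.symm, Equiv.swap_apply_of_ne_of_ne]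
  have swap_det : (N.submatrix (Equiv.swap (Sum.inl i) (Sum.inr j)) id).det = -N.det := by
    rw [det_permute, Equiv.Perm.sign_swap Sum.inl_ne_inr]
    simp
  rw [eq_neg_iff_add_eq_zero, add_comm, ← eq_neg_iff_add_eq_zero, ← swap_det, swap_rows,
    det_fromBlocks_zero₂₁, det_updateRow_smul, ← adjugate_apply, ← adjugate_apply, mul_assoc]

theorem det_fromBlocks_single_single (A : Matrix m m R) (D : Matrix n n R) (i : m) (j : n)
    (b c : R) :
    (fromBlocks A (Matrix.single i j b) (Matrix.single j i c) D).det =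
      A.det * D.det - b * c * (A.adjugate i i * D.adjugate j j) := by
  set M := fromBlocks A 0 (Matrix.single j i c) D with hM
  have split_row : fromBlocks A (Matrix.single i j b) (Matrix.single j i c) D =
      M.updateRow (.inl i) (M (.inl i) + b • Pi.single (.inr j) 1) := by
    ext (k | k) l
    · obtain rfl | hk := eq_or_ne k i
      · cases l <;> simp [hM, Matrix.single_apply, Pi.single_apply, eq_comm]
      · cases l <;> simp [hM, hk, hk.symm]
    · cases l <;> simp [hM]
  rw [split_row, det_updateRow_add, det_updateRow_smul, updateRow_eq_self,
    det_fromBlocks_zero₁₂, det_updateRow_fromBlocks_zero_single]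
  ring

theorem adjugate_apply_self (A : Matrix n n R) (i : n) :
    A.adjugate i i = (A.submatrix (Subtype.val : ({i}ᶜ : Set n) → n) Subtype.val).det := by
  have row_i (k : n) (hk : ¬ k ≠ i) (l : n) (hl : l ≠ i) :
      A.updateRow i (Pi.single i 1) k l = 0 := by
    rw [not_not.1 hk, updateRow_self, Pi.single_eq_of_ne hl]
  have block_compl : (A.updateRow i (Pi.single i 1)).toSquareBlockProp (· ≠ i) =
      A.submatrix (Subtype.val : ({i}ᶜ : Set n) → n) Subtype.val := by
    ext k l
    rw [toSquareBlockProp, toBlock_apply, updateRow_ne k.2]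
    rfl
  have block_self : (A.updateRow i (Pi.single i 1)).toSquareBlockProp (¬ · ≠ i) = 1 := by
    ext ⟨k, hk⟩ ⟨l, hl⟩
    obtain rfl := not_not.1 hk
    obtain rfl := not_not.1 hl
    simp [toSquareBlockProp]
  rw [adjugate_apply, twoBlockTriangular_det _ (· ≠ i) row_i, block_self, det_one, mul_one,
    block_compl]
  congr!

theorem charmatrix_submatrix_of_injective (A : Matrix n n R) {f : m → n}
    (hf : Function.Injective f) :
    (A.submatrix f f).charmatrix = A.charmatrix.submatrix f f := by
  ext j k : 1
  simp [charmatrix_apply, diagonal_apply, hf.eq_iff]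

theorem charpoly_fromBlocks_single_single (A : Matrix m m R) (D : Matrix n n R) (i : m) (j : n)
    (b c : R) :
    (fromBlocks A (Matrix.single i j b) (Matrix.single j i c) D).charpoly =
      A.charpoly * D.charpoly - C (b * c) *
        ((A.submatrix (Subtype.val : ({i}ᶜ : Set m) → m) Subtype.val).charpoly *
          (D.submatrix (Subtype.val : ({j}ᶜ : Set n) → n) Subtype.val).charpoly) := by
  simp only [charpoly, charmatrix_fromBlocks, map_single, neg_single,
    det_fromBlocks_single_single, adjugate_apply_self,
    charmatrix_submatrix_of_injective _ Subtype.val_injective, neg_mul_neg, C_mul]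

end BridgedMatrix

section AdjMatrix

variable {V W : Type*}

instance decidableRelSumAdj (G : SimpleGraph V) (H : SimpleGraph W) [DecidableRel G.Adj]
    [DecidableRel H.Adj] : DecidableRel (G ⊕g H).Adj
  | .inl a, .inl b => inferInstanceAs (Decidable (G.Adj a b))
  | .inr a, .inr b => inferInstanceAs (Decidable (H.Adj a b))
  | .inl _, .inr _ | .inr _, .inl _ => .isFalse (by simp)

variable [DecidableEq V] [DecidableEq W] (R : Type*) [CommRing R]

theorem adjMatrix_sum_sup_edge (G : SimpleGraph V) (H : SimpleGraph W) [DecidableRel G.Adj]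
    [DecidableRel H.Adj] (v : V) (w : W) :
    ((G ⊕g H) ⊔ edge (.inl v) (.inr w)).adjMatrix R =
      fromBlocks (G.adjMatrix R) (Matrix.single v w 1) (Matrix.single w v 1) (H.adjMatrix R) := by
  ext (a | a) (b | b) <;>
    simp only [adjMatrix_apply, sup_adj, sum_adj, edge_adj, fromBlocks_apply₁₁, fromBlocks_apply₁₂,
      fromBlocks_apply₂₁, fromBlocks_apply₂₂, Matrix.single_apply] <;>
    grind

variable [Fintype V] [Fintype W]

theorem charpoly_adjMatrix_sum_sup_edge (G : SimpleGraph V) (H : SimpleGraph W)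
    [DecidableRel G.Adj] [DecidableRel H.Adj] (v : V) (w : W) :
    (((G ⊕g H) ⊔ edge (.inl v) (.inr w)).adjMatrix R).charpoly =
      (G.adjMatrix R).charpoly * (H.adjMatrix R).charpoly -
        ((G.induce {v}ᶜ).adjMatrix R).charpoly * ((H.induce {w}ᶜ).adjMatrix R).charpoly := by
  rw [adjMatrix_sum_sup_edge, charpoly_fromBlocks_single_single, mul_one, C_1, one_mul,
    ← (Embedding.induce (G := G) {v}ᶜ).submatrix_adjMatrix R,
    ← (Embedding.induce (G := H) {w}ᶜ).submatrix_adjMatrix R]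
  rfl

theorem charpoly_adjMatrix_of_eq_top {G : SimpleGraph V} [DecidableRel G.Adj] (hG : G = ⊤)
    {n : ℕ} (hV : Fintype.card V = n + 1) :
    (G.adjMatrix R).charpoly = (X + 1) ^ n * (X - C (n : R)) := by
  have rank_one : G.adjMatrix R = vecMulVec 1 1 - scalar V 1 := by
    subst hG
    ext i j
    by_cases h : i = j <;> simp [h]
  rw [rank_one, charpoly_sub_scalar, charpoly_vecMulVec, one_dotProduct_one, hV]
  simp only [smul_eq_C_mul, sub_comp, add_comp, mul_comp, pow_comp, X_comp, C_comp, one_comp,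
    Nat.add_sub_cancel, Nat.cast_add, Nat.cast_one, C_add, C_1]
  ring

end AdjMatrix

section BridgeGraph

/-- The complete bridge graph `B_{m+1,n+1}` as the disjoint union of `K_{m+1}` and `K_{n+1}` with
one added edge, which is the form the bridge formula applies to. -/
def bridgeGraphIso (m n : ℕ) :
    ((⊤ : SimpleGraph (Fin (m + 1))) ⊕g (⊤ : SimpleGraph (Fin (n + 1)))) ⊔
      edge (.inl (Fin.last m)) (.inr 0) ≃g bridgeGraph (m + 1) (n + 1) where
  toEquiv := finSumFinEquiv
  map_rel_iff' {a b} := by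
    rcases a with a | a <;> rcases b with b | b <;>
      simp only [bridgeGraph, fromRel_adj, sup_adj, edge_adj, sum_adj, top_adj,
        finSumFinEquiv_apply_left, finSumFinEquiv_apply_right, Fin.ext_iff, Fin.val_castAdd,
        Fin.val_natAdd, Fin.val_last, Fin.val_zero, ne_eq, Sum.inl.injEq, Sum.inr.injEq,
        reduceCtorEq] <;>
      grind

variable (R : Type*) [CommRing R]

theorem charpoly_adjMatrix_bridgeGraph (m n : ℕ) :
    ((bridgeGraph (m + 2) (n + 2)).adjMatrix R).charpoly =
      (X + 1) ^ (m + n) *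
        ((X + 1) ^ 2 * (X - C (m + 1 : R)) * (X - C (n + 1 : R)) -
          (X - C (m : R)) * (X - C (n : R))) := by
  have card_compl (k : ℕ) (v : Fin (k + 2)) : Fintype.card ({v}ᶜ : Set (Fin (k + 2))) = k + 1 := by
    rw [Fintype.card_compl_set, Fintype.card_fin, Set.card_singleton, Nat.add_succ_sub_one]
  rw [← (bridgeGraphIso (m + 1) (n + 1)).reindex_adjMatrix R, charpoly_reindex,
    charpoly_adjMatrix_sum_sup_edge,
    charpoly_adjMatrix_of_eq_top R rfl (Fintype.card_fin (m + 2)),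
    charpoly_adjMatrix_of_eq_top R rfl (Fintype.card_fin (n + 2)),
    charpoly_adjMatrix_of_eq_top R (induce_top _) (card_compl m _),
    charpoly_adjMatrix_of_eq_top R (induce_top _) (card_compl n _), Nat.cast_succ, Nat.cast_succ]
  ring

end BridgeGraph

section BridgeCubic

variable {R : Type*} [CommRing R]

/-- The cubic factor `x³ + (3 - c)x² + (2 - 2c)x - 2` of the characteristic polynomial of
`B_{c,c-1}`, with the size `c` an arbitrary scalar so that no natural-number subtraction occurs. -/
def bridgeCubic (c : R) : Cubic R where
  a := 1
  b := 3 - c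
  c := 2 - 2 * c
  d := -2

theorem eval_bridgeCubic (c x : R) :
    (bridgeCubic c).toPoly.eval x = x ^ 3 + (3 - c) * x ^ 2 + (2 - 2 * c) * x - 2 := by
  simp only [Cubic.toPoly, bridgeCubic, map_one, one_mul, map_sub, map_mul, map_neg, eval_add,
    eval_pow, eval_X, eval_mul, eval_sub, eval_C, eval_neg]
  ring

theorem charpoly_adjMatrix_bridgeGraph_pred {m : ℕ} (hm : 2 < m) :
    ((bridgeGraph m (m - 1)).adjMatrix R).charpoly =
      (X + 1) ^ (2 * m - 5) * (X - C (m - 2 : R)) * (bridgeCubic (m : R)).toPoly := by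
  obtain ⟨k, rfl⟩ : ∃ k, m = k + 3 := ⟨m - 3, by omega⟩
  rw [show 2 * (k + 3) - 5 = k + 1 + k by omega]
  refine (charpoly_adjMatrix_bridgeGraph R (k + 1) k).trans ?_
  simp only [bridgeCubic, Cubic.toPoly, Nat.cast_add, Nat.cast_one, Nat.cast_ofNat, map_add,
    map_sub, map_mul, map_neg, map_one, map_natCast, map_ofNat C]
  ring

theorem toPoly_eq_prod_of_isRoot [IsDomain R] {P : Cubic R} {x y z : R} (ha : P.a = 1)
    (hx : P.toPoly.IsRoot x) (hy : P.toPoly.IsRoot y) (hz : P.toPoly.IsRoot z)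
    (hxy : x ≠ y) (hxz : x ≠ z) (hyz : y ≠ z) :
    P.toPoly = (X - C x) * (X - C y) * (X - C z) := by
  classical
  have ha₀ : P.a ≠ 0 := ha ▸ one_ne_zero
  have card_roots : ({x, y, z} : Finset R).card = 3 :=
    Finset.card_eq_three.2 ⟨x, y, z, hxy, hxz, hyz, rfl⟩
  have roots_eq : P.toPoly.roots = ({x, y, z} : Finset R).val :=
    roots_eq_of_degree_eq_card (by simp [hx.eq_zero, hy.eq_zero, hz.eq_zero])
      (by rw [card_roots, Cubic.degree_of_a_ne_zero ha₀]; rfl)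
  rw [← prod_multiset_X_sub_C_of_monic_of_roots_card_eq (Cubic.monic_of_a_eq_one ha)
    (by rw [roots_eq, Finset.card_val, card_roots, Cubic.natDegree_of_a_ne_zero ha₀]), roots_eq]
  simp [hxy, hxz, hyz, mul_assoc]

theorem exists_bridgeCubic_eq_prod {c : ℝ} (hc : 2 < c) :
    ∃ θ₁ θ₂ θ₃ : ℝ, c - 2 < θ₁ ∧ θ₂ ∈ Set.Ioo (-1) 0 ∧ θ₃ < -1 ∧
      (bridgeCubic c).toPoly = (X - C θ₁) * (X - C θ₂) * (X - C θ₃) := by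
  have cont (s : Set ℝ) : ContinuousOn (bridgeCubic c).toPoly.eval s :=
    (bridgeCubic c).toPoly.continuousOn
  have at_neg_two : (bridgeCubic c).toPoly.eval (-2) < 0 := by
    rw [eval_bridgeCubic]; linarith
  have at_neg_one : 0 < (bridgeCubic c).toPoly.eval (-1) := by
    rw [eval_bridgeCubic]; linarith
  have at_zero : (bridgeCubic c).toPoly.eval 0 < 0 := by
    rw [eval_bridgeCubic]; linarith
  have at_sub_two : (bridgeCubic c).toPoly.eval (c - 2) < 0 := by
    rw [eval_bridgeCubic]; nlinarith
  have at_self : 0 < (bridgeCubic c).toPoly.eval c := by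
    rw [eval_bridgeCubic]; nlinarith
  obtain ⟨θ₁, ⟨h₁, -⟩, root₁⟩ :=
    intermediate_value_Ioo (by linarith) (cont (.Icc (c - 2) c)) ⟨at_sub_two, at_self⟩
  obtain ⟨θ₂, ⟨h₂, h₂'⟩, root₂⟩ :=
    intermediate_value_Ioo' (by norm_num) (cont (.Icc (-1) 0)) ⟨at_zero, at_neg_one⟩
  obtain ⟨θ₃, ⟨-, h₃⟩, root₃⟩ :=
    intermediate_value_Ioo (by norm_num) (cont (.Icc (-2) (-1))) ⟨at_neg_two, at_neg_one⟩
  exact ⟨θ₁, θ₂, θ₃, h₁, ⟨h₂, h₂'⟩, h₃, toPoly_eq_prod_of_isRoot rfl root₁ root₂ root₃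
    (by linarith) (by linarith) (by linarith)⟩

end BridgeCubic

/-- For every integer `m > 2`, the cubic `x³ + (3−m)x² + (2−2m)x − 2` has
three real roots `θ₁ > θ₂ > θ₃` satisfying `θ₁ > m−2 > 0 > θ₂ > −1 > θ₃`, and the multiset of
eigenvalues of `A(B_{m,m−1})`, counted with multiplicity (i.e. the multiset of roots of the
characteristic polynomial), consists of `θ₁`, `m−2`, `θ₂` and `θ₃` each once, together with
`−1` with multiplicity `2m−5`. -/
theorem spectrum_bridgeGraph (m : ℕ) (hm : 2 < m) :
    ∃ θ₁ θ₂ θ₃ : ℝ,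
      (∀ x : ℝ, x ^ 3 + (3 - (m : ℝ)) * x ^ 2 + (2 - 2 * (m : ℝ)) * x - 2 =
        (x - θ₁) * (x - θ₂) * (x - θ₃)) ∧
      (m : ℝ) - 2 < θ₁ ∧ (0 : ℝ) < (m : ℝ) - 2 ∧ θ₂ < 0 ∧ -1 < θ₂ ∧ θ₃ < -1 ∧
      ((bridgeGraph m (m - 1)).adjMatrix ℝ).charpoly.roots =
        θ₁ ::ₘ ((m : ℝ) - 2) ::ₘ θ₂ ::ₘ θ₃ ::ₘ Multiset.replicate (2 * m - 5) (-1) := by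
  have hm' : (2 : ℝ) < m := by exact_mod_cast hm
  obtain ⟨θ₁, θ₂, θ₃, h₁, ⟨h₂, h₂'⟩, h₃, factored⟩ := exists_bridgeCubic_eq_prod hm'
  refine ⟨θ₁, θ₂, θ₃, fun x => ?_, h₁, sub_pos.2 hm', h₂', h₂, h₃, ?_⟩
  · rw [← eval_bridgeCubic, factored]
    simp only [eval_mul, eval_sub, eval_X, eval_C]
  · rw [← roots_multiset_prod_X_sub_C (θ₁ ::ₘ _), charpoly_adjMatrix_bridgeGraph_pred hm, factored]
    congr 1
    simp only [Multiset.map_cons, Multiset.map_replicate, Multiset.prod_cons,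
      Multiset.prod_replicate, map_neg, map_one, sub_neg_eq_add]
    ring
end
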